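/- arXiv:1203.1754 — 2 statements merged into one kernel-verified Lean document; each statement's English description precedes it below -/
import Mathlib

section
/- Let G be a finite simple graph and let s be a non-isolated simplicial vertex of G, i.e., s has at least one neighbour and the neighbourhood of s is a clique. If G has an edge clique cover of size k, then G has an edge clique cover of size at most k one of whose members is the closed neighbourhood N[s] of s. -/
/-- An edge clique cover of `G`: a family of vertex sets, each a clique in `G`,
such that every edge of `G` has both endpoints in some member of the family. -/
def IsEdgeCliqueCover {V : Type} (G : SimpleGraph V) (𝒞 : Finset (Finset V)) : Prop :=
  (∀ C ∈ 𝒞, G.IsClique (C : Set V)) ∧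
    ∀ u v : V, G.Adj u v → ∃ C ∈ 𝒞, u ∈ C ∧ v ∈ C

theorem stmt11 {V : Type} [Fintype V] [DecidableEq V]
    (G : SimpleGraph V) [DecidableRel G.Adj] (s : V)
    (hne : ∃ t, G.Adj s t)
    (hsimp : G.IsClique (G.neighborSet s))
    (k : ℕ) (𝒞 : Finset (Finset V))
    (h : IsEdgeCliqueCover G 𝒞) (hk : 𝒞.card = k) :
    ∃ 𝒞' : Finset (Finset V), IsEdgeCliqueCover G 𝒞' ∧ 𝒞'.card ≤ k ∧
      insert s (G.neighborFinset s) ∈ 𝒞' := by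
  obtain ⟨t, ht⟩ := hne
  obtain ⟨hc, he⟩ := h
  obtain ⟨C, hC, hsC, htC⟩ := he s t ht
  refine ⟨insert (insert s (G.neighborFinset s)) (𝒞.erase C), ⟨?_, ?_⟩, ?_, ?_⟩
  · intro D hD
    rcases Finset.mem_insert.mp hD with rfl | hD
    · intro u hu v hv huv
      simp only [Finset.coe_insert, Set.mem_insert_iff, Finset.mem_coe,
        SimpleGraph.mem_neighborFinset] at hu hv
      rcases hu with rfl | hu
      · rcases hv with rfl | hv
        · exact absurd rfl huv
        · exact hv
      · rcases hv with rfl | hv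
        · exact hu.symm
        · exact hsimp hu hv huv
    · exact hc D (Finset.mem_of_mem_erase hD)
  · have hsub : ∀ x ∈ C, x ∈ insert s (G.neighborFinset s) := by
      intro x hx
      by_cases hxs : x = s
      · simp [hxs]
      · have : G.Adj s x := hc C hC hsC hx (Ne.symm hxs)
        simp [this]
    intro u v huv
    obtain ⟨D, hD, hu, hv⟩ := he u v huv
    by_cases hDC : D = C
    · subst hDC
      exact ⟨_, Finset.mem_insert_self _ _, hsub u hu, hsub v hv⟩
    · exact ⟨D, Finset.mem_insert_of_mem (Finset.mem_erase.mpr ⟨hDC, hD⟩), hu, hv⟩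
  · have h1 := Finset.card_insert_le (insert s (G.neighborFinset s)) (𝒞.erase C)
    have h2 := Finset.card_erase_add_one hC
    omega
  · exact Finset.mem_insert_self _ _
end

section
/- Let Φ be a CNF formula over variables indexed by Fin n (a finite set of clauses, each clause a finite set of literals, each literal a variable or its negation), and let Φ' = Φ ∧ Φ̄, where Φ̄ is the formula over n fresh duplicate variables obtained from Φ by replacing every variable with its duplicate and negating every literal (so Φ' is a CNF formula over 2n variables). Then: (a) Φ' is satisfiable if and only if Φ is satisfiable; and (b) if φ is a satisfying assignment of Φ, then the assignment of the 2n variables of Φ' that agrees with φ on the original variables and assigns to each duplicate variable the negation of the value of its original satisfies Φ' and assigns the value true to exactly n of the 2n variables. -/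
/-- A CNF formula over variables `V` is a finite set of clauses, each clause a
finite set of literals; a literal is a pair of a variable and a polarity
(`true` = positive, `false` = negative). `φ` satisfies the formula iff every
clause contains a literal `(x, p)` with `φ x = p`. -/
def Satisfies {V : Type} (Φ : Finset (Finset (V × Bool))) (φ : V → Bool) : Prop :=
  ∀ Cl ∈ Φ, ∃ l ∈ Cl, φ l.1 = l.2

/-- `Φ' = Φ ∧ Φ̄`: the original formula on the original variables (`Sum.inl`),
together with a copy on duplicate variables (`Sum.inr`) with all literals negated. -/
def dualFormula {n : ℕ} (Φ : Finset (Finset (Fin n × Bool))) :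
    Finset (Finset ((Fin n ⊕ Fin n) × Bool)) :=
  (Φ.image fun Cl => Cl.image fun l => ((Sum.inl l.1 : Fin n ⊕ Fin n), l.2)) ∪
    (Φ.image fun Cl => Cl.image fun l => ((Sum.inr l.1 : Fin n ⊕ Fin n), !l.2))

theorem dual_sat {n : ℕ} (Φ : Finset (Finset (Fin n × Bool))) (φ : Fin n → Bool)
    (h : Satisfies Φ φ) : Satisfies (dualFormula Φ) (Sum.elim φ fun x => !(φ x)) := by
  intro Cl hCl
  rcases Finset.mem_union.1 hCl with hC | hC
  · obtain ⟨D, hD, rfl⟩ := Finset.mem_image.1 hC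
    obtain ⟨l, hl, e⟩ := h D hD
    exact ⟨_, Finset.mem_image_of_mem _ hl, by simpa using e⟩
  · obtain ⟨D, hD, rfl⟩ := Finset.mem_image.1 hC
    obtain ⟨l, hl, e⟩ := h D hD
    exact ⟨_, Finset.mem_image_of_mem _ hl, by simp [e]⟩

theorem stmt12 (n : ℕ) (Φ : Finset (Finset (Fin n × Bool))) :
    ((∃ ψ : Fin n ⊕ Fin n → Bool, Satisfies (dualFormula Φ) ψ) ↔
      ∃ φ : Fin n → Bool, Satisfies Φ φ) ∧
    (∀ φ : Fin n → Bool, Satisfies Φ φ →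
      Satisfies (dualFormula Φ) (Sum.elim φ fun x => !(φ x)) ∧
        (Finset.univ.filter fun v : Fin n ⊕ Fin n =>
            Sum.elim φ (fun x => !(φ x)) v = true).card = n) := by
  refine ⟨⟨?_, ?_⟩, ?_⟩
  · rintro ⟨ψ, h⟩
    refine ⟨fun x => ψ (Sum.inl x), fun D hD => ?_⟩
    obtain ⟨l, hl, e⟩ := h _ (Finset.mem_union_left _ (Finset.mem_image_of_mem _ hD))
    obtain ⟨m, hm, rfl⟩ := Finset.mem_image.1 hl
    exact ⟨m, hm, e⟩
  · rintro ⟨φ, h⟩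
    exact ⟨_, dual_sat Φ φ h⟩
  · intro φ h
    refine ⟨dual_sat Φ φ h, ?_⟩
    rw [Finset.card_filter, Fintype.sum_sum_type, ← Finset.sum_add_distrib]
    have : ∀ x : Fin n, ((if Sum.elim φ (fun x => !(φ x)) (Sum.inl x) = true then 1 else 0) +
        (if Sum.elim φ (fun x => !(φ x)) (Sum.inr x) = true then 1 else 0) : ℕ) = 1 := by
      intro x
      cases hx : φ x <;> simp [hx]
    rw [Finset.sum_congr rfl fun x _ => this x]
    simp
end
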